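/- For every $n\ge0$ and real $t$: $|B_n-A_n|^2=\sum_{r=0}^n t^{2r}K_r(n)$, where $K_r(n)=\sum_{p=-r}^r(-1)^p\Delta_{r+p}^n\Delta_{r-p}^n$; moreover $K_0(n)=1$ and for $1\le r\le n$ the coefficient $K_r(n)$ admits the closed form $K_r(n)=\sum T_1^{l_1}T_{k_2}^{l_2}\cdots T_{k_r}^{l_r}\,\rho_{k_{r+1}-1}\,2^{H_r}$, where the sum runs over all integer chains $1\le l_1<k_2\le l_2<\cdots<k_r\le l_r<k_{r+1}\le n+1$ and $H_r=\#\{1\le i\le r: l_i+1<k_{i+1}\}$ (with $k_1:=1$). -/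

import Mathlib

open scoped Classical

/-- `ρ 0 = 1`, `ρ n = a 1 ⋯ a n`. -/
noncomputable def rho (a : ℕ → ℝ) (n : ℕ) : ℝ := ∏ k ∈ Finset.Icc 1 n, a k

/-- `R_k^l = ∑_{s=k}^l η s · ρ l / ρ s`. -/
noncomputable def Rkl (a η : ℕ → ℝ) (k l : ℕ) : ℝ :=
  ∑ s ∈ Finset.Icc k l, η s * (rho a l / rho a s)

/-- `T_k^l = (R_k^l)² ρ (k-1) / ρ l`. -/
noncomputable def Tkl (a η : ℕ → ℝ) (k l : ℕ) : ℝ :=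
  (Rkl a η k l) ^ 2 * (rho a (k - 1) / rho a l)

/-- `Δ_r^n = ∑_{1 ≤ k₁ < ⋯ < k_r ≤ n} R_1^{k₁} R_{k₁+1}^{k₂} ⋯ R_{k_{r-1}+1}^{k_r}`
(`Δ_0^n = 1`, and `Δ_r^n = 0` for `r > n`). -/
noncomputable def Delta (a η : ℕ → ℝ) (r n : ℕ) : ℝ :=
  ∑ k ∈ (Fintype.piFinset fun _ : Fin r => Finset.Icc 1 n).filter
      (fun k => ∀ i j : Fin r, i < j → k i < k j),
    ∏ i : Fin r, Rkl a η (if (i : ℕ) = 0 then 1 else k ⟨(i : ℕ) - 1, Nat.lt_of_le_of_lt (Nat.sub_le _ _) i.isLt⟩ + 1) (k i)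

/-- `K_r(n) = ∑_{p=-r}^r (-1)^p Δ_{r+p}^n Δ_{r-p}^n`. -/
noncomputable def Kr (a η : ℕ → ℝ) (r n : ℕ) : ℝ :=
  ∑ p ∈ Finset.Icc (-(r : ℤ)) (r : ℤ),
    (-1 : ℝ) ^ p * Delta a η ((r : ℤ) + p).toNat n * Delta a η ((r : ℤ) - p).toNat n

/-- Shift of the data: `θ^j` replaces `(a k, η k)` by `(a (k+j), η (k+j))`. -/
def shift (f : ℕ → ℝ) (j : ℕ) : ℕ → ℝ := fun k => f (k + j)

/-!
The differences `B_n - A_n` are the values at `X = -i t` of real polynomials `P_n` with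
`P_n = P_{n-1} + E_n` and `E_n = a_n E_{n-1} + η_n X P_{n-1}`. Solving the second recurrence shows
that the coefficients of `P_n` are the `Δ_r^n`; since complex conjugation at `-i t` is `X ↦ -X`,
the `K_r(n)` are, up to sign, the even coefficients of `N_n = P_n(X) P_n(-X)`.

For the closed form put `u_j = N_j - N_{j-1}` (with `u_0 = 1`) and `M_n = E_n(X) E_n(-X)`.
The quadratic expressions in `P_n(±X)` and `E_n(±X)` satisfy linear recurrences, which are solved by
`M_n = -X² ∑_{j<n} (R_{j+1}^n)² u_j` and
`u_n = ρ_n (2 ∑_{1≤l<n} M_l / ρ_l + M_n / ρ_n)`.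
Substituting the first into the second, each factor `-X²` costs one link
`T_k^l` of a chain, and the factor `2` appears exactly when the chain leaves a gap after `l`.
-/

section ChainSums

open Matrix Fintype

theorem sum_piFinset_const_succ {α M : Type*} [AddCommMonoid M] (r : ℕ) (s : Finset α)
    (f : (Fin (r + 1) → α) → M) :
    ∑ k ∈ piFinset (fun _ : Fin (r + 1) => s), f k =
      ∑ m ∈ s, ∑ k ∈ piFinset (fun _ : Fin r => s), f (Fin.snoc (α := fun _ => α) k m) := by
  rw [← Finset.sum_product']
  exact (Finset.sum_equiv (Fin.snocEquiv fun _ => α)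
    (fun q => by simp [Fin.forall_fin_succ', and_comm]) fun _ _ => rfl).symm

theorem vecCons_snoc {α : Type*} {r : ℕ} (d : α) (k : Fin r → α) (m : α) :
    vecCons d (Fin.snoc (α := fun _ => α) k m) = Fin.snoc (α := fun _ => α) (vecCons d k) m :=
  Fin.cons_snoc_eq_snoc_cons d k m

theorem vecCons_castSucc {α : Type*} {r : ℕ} (d : α) (k : Fin r → α) (i : Fin r) :
    vecCons d k i.castSucc =
      if (i : ℕ) = 0 then d else k ⟨i - 1, Nat.lt_of_le_of_lt (Nat.sub_le _ _) i.isLt⟩ := by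
  obtain ⟨i, hi⟩ := i
  cases i <;> rfl

/-- The total weight of the chains `d = k₀ < k₁ < ⋯ < k_r = m` of natural numbers, where a chain
weighs `∏ i, w k_{i-1} k_i`. -/
def chainWeight {R : Type*} [CommSemiring R] (w : ℕ → ℕ → R) (d : ℕ) : ℕ → ℕ → R
  | 0, m => if m = d then 1 else 0
  | r + 1, m => ∑ x ∈ Finset.range m, w x m * chainWeight w d r x

theorem sum_prod_vecCons_eq_sum_chainWeight {R : Type*} [CommSemiring R] {w : ℕ → ℕ → R}
    (hw : ∀ x m, m ≤ x → w x m = 0) {d n : ℕ} (hd : d ≤ n) (r : ℕ) (g : ℕ → R) :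
    ∑ k ∈ piFinset (fun _ : Fin r => Finset.Icc 1 n),
      (∏ i, w (vecCons d k i.castSucc) (k i)) * g (vecCons d k (Fin.last r)) =
    ∑ m ∈ Finset.range (n + 1), chainWeight w d r m * g m := by
  induction r generalizing g with
  | zero => simp [chainWeight, Nat.lt_succ_of_le hd]
  | succ r ih =>
    have last_step (m : ℕ) (hm : m ≤ n) :
        ∑ x ∈ Finset.range (n + 1), chainWeight w d r x * w x m = chainWeight w d (r + 1) m := by
      rw [chainWeight, ← Finset.sum_subset (Finset.range_mono (Nat.le_succ_of_le hm))
        fun x _ hx => by rw [hw x m (by simpa using hx), mul_zero]]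
      exact Finset.sum_congr rfl fun x _ => mul_comm _ _
    rw [sum_piFinset_const_succ, Finset.range_eq_Ico, Finset.sum_eq_sum_Ico_succ_bot n.succ_pos]
    simp only [vecCons_snoc, Fin.prod_univ_castSucc, Fin.snoc_castSucc, Fin.snoc_last]
    rw [chainWeight, Finset.sum_range_zero, zero_mul, zero_add]
    refine Finset.sum_congr rfl fun m hm => ?_
    simp only [mul_assoc]
    rw [ih fun x => w x m * g m, ← last_step m (Finset.mem_Icc.1 hm).2, Finset.sum_mul]
    simp only [mul_assoc]

end ChainSums

section Weights

variable {a : ℕ → ℝ}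

theorem rho_succ (a : ℕ → ℝ) (n : ℕ) : rho a (n + 1) = rho a n * a (n + 1) :=
  Finset.prod_Icc_succ_top n.succ_pos a

theorem rho_ne_zero (ha : ∀ k, 1 ≤ k → a k ≠ 0) (n : ℕ) : rho a n ≠ 0 :=
  Finset.prod_ne_zero_iff.2 fun k hk => ha k (Finset.mem_Icc.1 hk).1

theorem Rkl_eq_zero_of_lt (a η : ℕ → ℝ) {k l : ℕ} (h : l < k) : Rkl a η k l = 0 := by
  rw [Rkl, Finset.Icc_eq_empty_of_lt h, Finset.sum_empty]

theorem Rkl_succ (ha : ∀ k, 1 ≤ k → a k ≠ 0) (η : ℕ → ℝ) {k n : ℕ} (hk : k ≤ n + 1) :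
    Rkl a η k (n + 1) = a (n + 1) * Rkl a η k n + η (n + 1) := by
  rw [Rkl, Rkl, Finset.sum_Icc_succ_top hk, Finset.mul_sum, div_self (rho_ne_zero ha _), mul_one]
  congr 1
  refine Finset.sum_congr rfl fun s _ => ?_
  rw [rho_succ]
  ring

variable {M : Type*} [AddCommGroup M] [Module ℝ M]

theorem sum_Rkl_smul_succ (ha : ∀ k, 1 ≤ k → a k ≠ 0) (η : ℕ → ℝ) (u : ℕ → M) (n : ℕ) :
    ∑ j ∈ Finset.range (n + 1), Rkl a η (j + 1) (n + 1) • u j =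
      a (n + 1) • ∑ j ∈ Finset.range n, Rkl a η (j + 1) n • u j +
        η (n + 1) • ∑ j ∈ Finset.range (n + 1), u j := by
  have extend : ∑ j ∈ Finset.range n, Rkl a η (j + 1) n • u j =
      ∑ j ∈ Finset.range (n + 1), Rkl a η (j + 1) n • u j := by
    rw [Finset.sum_range_succ, Rkl_eq_zero_of_lt a η n.lt_succ_self, zero_smul, add_zero]
  rw [extend, Finset.smul_sum, Finset.smul_sum, ← Finset.sum_add_distrib]
  refine Finset.sum_congr rfl fun j hj => ?_
  rw [Rkl_succ ha η (Finset.mem_range.1 hj)]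
  module

theorem sum_Rkl_sq_smul_succ (ha : ∀ k, 1 ≤ k → a k ≠ 0) (η : ℕ → ℝ) (u : ℕ → M) (n : ℕ) :
    ∑ j ∈ Finset.range (n + 1), Rkl a η (j + 1) (n + 1) ^ 2 • u j =
      a (n + 1) ^ 2 • ∑ j ∈ Finset.range n, Rkl a η (j + 1) n ^ 2 • u j +
        (2 * a (n + 1) * η (n + 1)) • ∑ j ∈ Finset.range n, Rkl a η (j + 1) n • u j +
        η (n + 1) ^ 2 • ∑ j ∈ Finset.range (n + 1), u j := by
  have extend (p : ℕ) (hp : p ≠ 0) : ∑ j ∈ Finset.range n, Rkl a η (j + 1) n ^ p • u j =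
      ∑ j ∈ Finset.range (n + 1), Rkl a η (j + 1) n ^ p • u j := by
    rw [Finset.sum_range_succ, Rkl_eq_zero_of_lt a η n.lt_succ_self, zero_pow hp, zero_smul,
      add_zero]
  have extend_one := extend 1 one_ne_zero
  simp only [pow_one] at extend_one
  rw [extend 2 two_ne_zero, extend_one, Finset.smul_sum, Finset.smul_sum, Finset.smul_sum,
    ← Finset.sum_add_distrib, ← Finset.sum_add_distrib]
  refine Finset.sum_congr rfl fun j hj => ?_
  rw [Rkl_succ ha η (Finset.mem_range.1 hj)]
  module

end Weights

section DeltaRecurrence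

open Fintype Matrix

variable {a : ℕ → ℝ}

theorem Delta_zero_left (a η : ℕ → ℝ) (n : ℕ) : Delta a η 0 n = 1 := by simp [Delta]

theorem Delta_eq_zero_of_lt (a η : ℕ → ℝ) {r n : ℕ} (h : n < r) : Delta a η r n = 0 := by
  refine Finset.sum_eq_zero fun k hk => ?_
  obtain ⟨hk, hmono⟩ := Finset.mem_filter.1 hk
  have inj : Function.Injective k := StrictMono.injective fun i j => hmono i j
  have := Finset.card_le_card_of_injOn k (fun i _ => mem_piFinset.1 hk i) inj.injOn
    (s := Finset.univ)
  simp at this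
  omega

/-- The part `Δ_r^m - Δ_r^{m-1}` of `Δ_r^m` coming from the chains that end at `m`. -/
noncomputable def deltaAt (a η : ℕ → ℝ) : ℕ → ℕ → ℝ :=
  chainWeight (fun x m => Rkl a η (x + 1) m) 0

theorem Delta_eq_sum_deltaAt (a η : ℕ → ℝ) (r n : ℕ) :
    Delta a η r n = ∑ m ∈ Finset.range (n + 1), deltaAt a η r m := by
  have key := sum_prod_vecCons_eq_sum_chainWeight (w := fun x m => Rkl a η (x + 1) m)
    (fun x m h => Rkl_eq_zero_of_lt a η (Nat.lt_succ_of_le h)) n.zero_le r fun _ => 1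
  simp only [mul_one] at key
  rw [deltaAt, ← key, Delta]
  have step (k : Fin r → ℕ) (i : Fin r) :
      (if (i : ℕ) = 0 then 1
        else k ⟨i - 1, Nat.lt_of_le_of_lt (Nat.sub_le _ _) i.isLt⟩ + 1) =
      vecCons 0 k i.castSucc + 1 := by
    rw [vecCons_castSucc]
    split_ifs <;> rfl
  simp only [step]
  refine Finset.sum_filter_of_ne fun k _ hne => ?_
  have increasing : StrictMono (vecCons 0 k) := Fin.strictMono_iff_lt_succ.2 fun i => by
    rw [cons_val_succ]
    by_contra h
    exact hne (Finset.prod_eq_zero (Finset.mem_univ i) (Rkl_eq_zero_of_lt a η (by omega)))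
  exact fun i j hij => increasing (Fin.succ_lt_succ_iff.2 hij)

theorem Delta_succ_right (a η : ℕ → ℝ) (r n : ℕ) :
    Delta a η r (n + 1) = Delta a η r n + deltaAt a η r (n + 1) := by
  simp only [Delta_eq_sum_deltaAt, Finset.sum_range_succ]

theorem deltaAt_succ_zero (a η : ℕ → ℝ) (r : ℕ) : deltaAt a η (r + 1) 0 = 0 := by
  simp [deltaAt, chainWeight]

theorem deltaAt_succ_succ (ha : ∀ k, 1 ≤ k → a k ≠ 0) (η : ℕ → ℝ) (r n : ℕ) :
    deltaAt a η (r + 1) (n + 1) =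
      a (n + 1) * deltaAt a η (r + 1) n + η (n + 1) * Delta a η r n := by
  rw [Delta_eq_sum_deltaAt]
  exact sum_Rkl_smul_succ ha η (deltaAt a η r) n

theorem Delta_succ_one (ha : ∀ k, 1 ≤ k → a k ≠ 0) (η : ℕ → ℝ) (r : ℕ) :
    Delta a η (r + 1) 1 = η 1 * Delta a η r 0 := by
  rw [Delta_succ_right, deltaAt_succ_succ ha, deltaAt_succ_zero,
    Delta_eq_zero_of_lt a η r.succ_pos]
  ring

theorem Delta_succ_add_two (ha : ∀ k, 1 ≤ k → a k ≠ 0) (η : ℕ → ℝ) (r n : ℕ) :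
    Delta a η (r + 1) (n + 2) =
      (1 + a (n + 2)) * Delta a η (r + 1) (n + 1) + η (n + 2) * Delta a η r (n + 1) -
        a (n + 2) * Delta a η (r + 1) n := by
  rw [Delta_succ_right a η _ (n + 1), deltaAt_succ_succ ha, Delta_succ_right a η _ n]
  ring

end DeltaRecurrence

section SignedEvenCoeff

open Polynomial

theorem coeff_comp_neg_X {R : Type*} [CommRing R] (p : R[X]) (j : ℕ) :
    (p.comp (-X)).coeff j = p.coeff j * (-1) ^ j := by
  rw [show (-X : R[X]) = C (-1) * X by simp, comp_C_mul_X_coeff]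

theorem coeff_eq_zero_of_comp_neg_X_eq_self {R : Type*} [CommRing R] [NoZeroDivisors R] [CharZero R]
    {p : R[X]} (hp : p.comp (-X) = p) {j : ℕ} (hj : Odd j) : p.coeff j = 0 := by
  have := coeff_comp_neg_X p j
  rwa [hp, hj.neg_one_pow, mul_neg_one, self_eq_neg] at this

/-- The functional `q ↦ (-1)^r [X^{2r}] q`. On an even polynomial it reads off the coefficient of
`t ^ (2 * r)` in `q (i t)`. -/
noncomputable def signedEvenCoeff (r : ℕ) : ℝ[X] →ₗ[ℝ] ℝ := (-1 : ℝ) ^ r • lcoeff ℝ (2 * r)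

theorem signedEvenCoeff_apply (r : ℕ) (q : ℝ[X]) :
    signedEvenCoeff r q = (-1) ^ r * q.coeff (2 * r) := rfl

theorem signedEvenCoeff_succ_neg_X_sq_mul (r : ℕ) (q : ℝ[X]) :
    signedEvenCoeff (r + 1) (-X ^ 2 * q) = signedEvenCoeff r q := by
  rw [signedEvenCoeff_apply, signedEvenCoeff_apply, mul_add_one, neg_mul, coeff_neg,
    coeff_X_pow_mul]
  ring

theorem signedEvenCoeff_mul_comp_neg_X (r : ℕ) (q : ℝ[X]) :
    signedEvenCoeff r (q * q.comp (-X)) = ∑ p ∈ Finset.Icc (-(r : ℤ)) r,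
      (-1) ^ p * q.coeff ((r : ℤ) + p).toNat * q.coeff ((r : ℤ) - p).toNat := by
  rw [signedEvenCoeff_apply, coeff_mul, Finset.mul_sum]
  refine Finset.sum_bij' (fun x _ => (x.1 : ℤ) - r)
    (fun p _ => (((r : ℤ) + p).toNat, ((r : ℤ) - p).toNat))
    (fun x hx => ?_) (fun p hp => ?_) (fun x hx => ?_) (fun p hp => ?_) (fun x hx => ?_)
  · have := Finset.HasAntidiagonal.mem_antidiagonal.1 hx
    rw [Finset.mem_Icc]; omega
  · have := Finset.mem_Icc.1 hp
    rw [Finset.HasAntidiagonal.mem_antidiagonal]; omega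
  · have := Finset.HasAntidiagonal.mem_antidiagonal.1 hx
    ext <;> dsimp only <;> omega
  · have := Finset.mem_Icc.1 hp
    dsimp only; omega
  · have := Finset.HasAntidiagonal.mem_antidiagonal.1 hx
    have sign : (-1 : ℝ) ^ ((x.1 : ℤ) - r) = (-1) ^ r * (-1) ^ x.2 := by
      rw [show (x.1 : ℤ) - r = ((r + x.2 : ℕ) : ℤ) - 2 * x.2 by push_cast; omega,
        zpow_sub₀ (by norm_num), zpow_natCast, zpow_mul, pow_add]
      simp
    rw [sign, coeff_comp_neg_X, show ((r : ℤ) + (x.1 - r)).toNat = x.1 by omega,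
      show ((r : ℤ) - (x.1 - r)).toNat = x.2 by omega]
    ring

theorem aeval_eq_sum_range_even_of_comp_neg_X_eq_self {R S : Type*} [CommRing R] [NoZeroDivisors R]
    [CharZero R] [Semiring S] [Algebra R S] {q : R[X]} (hq : q.comp (-X) = q) {N : ℕ}
    (hN : q.natDegree < 2 * N) (z : S) :
    aeval z q = ∑ r ∈ Finset.range N, q.coeff (2 * r) • (z ^ 2) ^ r := by
  rw [aeval_eq_sum_range' hN]
  refine (Finset.sum_of_injOn (2 * ·) (by simp [Set.InjOn]) (fun r hr => by simpa using hr)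
    (fun j hj hodd => ?_) fun r _ => ?_).symm
  · have : Odd j := by
      rw [← Nat.not_even_iff_odd, even_iff_exists_two_mul]
      rintro ⟨m, rfl⟩
      exact hodd ⟨m, by simpa using hj, rfl⟩
    rw [coeff_eq_zero_of_comp_neg_X_eq_self hq this, zero_smul]
  · rw [pow_mul]

/-- On the imaginary axis, conjugation turns `q` into `q.comp (-X)`. -/
theorem norm_sq_aeval_neg_I_mul {q : ℝ[X]} {n : ℕ} (hq : q.natDegree ≤ n) (t : ℝ) :
    ‖aeval (-(Complex.I * t)) q‖ ^ 2 =
      ∑ r ∈ Finset.range (n + 1), t ^ (2 * r) * signedEvenCoeff r (q * q.comp (-X)) := by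
  have conj_aeval : (starRingEnd ℂ) (aeval (-(Complex.I * t)) q) =
      aeval (-(Complex.I * t)) (q.comp (-X)) := by
    rw [← aeval_conj, aeval_comp]
    simp
  have even : (q * q.comp (-X)).comp (-X) = q * q.comp (-X) := by
    rw [mul_comp_neg_X, comp_neg_X_comp_neg_X, mul_comm]
  have degree : (q * q.comp (-X)).natDegree < 2 * (n + 1) := by
    have := natDegree_mul_le_of_le hq ((natDegree_comp_le (p := q) (q := -X)).trans
      (by simpa using hq))
    omega
  rw [← Complex.ofReal_inj, Complex.ofReal_pow, ← Complex.mul_conj', conj_aeval, ← map_mul,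
    aeval_eq_sum_range_even_of_comp_neg_X_eq_self even degree, Complex.ofReal_sum]
  refine Finset.sum_congr rfl fun r _ => ?_
  rw [signedEvenCoeff_apply, Complex.real_smul, neg_sq, mul_pow, Complex.I_sq, mul_pow, pow_mul]
  push_cast
  ring

end SignedEvenCoeff

section DiffPoly

open Polynomial

variable {a : ℕ → ℝ}

/-- The polynomials with `B_n - A_n = diffPoly a η n (-i t)`: they satisfy the recurrence of `B`
and `A` with `-i t` replaced by `X`. -/
noncomputable def diffPoly (a η : ℕ → ℝ) : ℕ → ℝ[X]
  | 0 => 1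
  | 1 => 1 + C (η 1) * X
  | n + 2 => (C (1 + a (n + 2)) + C (η (n + 2)) * X) * diffPoly a η (n + 1) -
      C (a (n + 2)) * diffPoly a η n

theorem eq_aeval_diffPoly {a η : ℕ → ℝ} {z : ℂ} {D : ℕ → ℂ} (hD0 : D 0 = 1)
    (hD1 : D 1 = 1 + η 1 * z)
    (hD : ∀ n, D (n + 2) = (1 + a (n + 2) + η (n + 2) * z) * D (n + 1) - a (n + 2) * D n)
    (n : ℕ) : D n = aeval z (diffPoly a η n) := by
  induction n using Nat.twoStepInduction with
  | zero => simp [diffPoly, hD0]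
  | one => simp [diffPoly, hD1]
  | more n ih₀ ih₁ => simp [diffPoly, hD, ih₀, ih₁]

theorem coeff_diffPoly (ha : ∀ k, 1 ≤ k → a k ≠ 0) (η : ℕ → ℝ) (r n : ℕ) :
    (diffPoly a η n).coeff r = Delta a η r n := by
  induction n using Nat.twoStepInduction generalizing r with
  | zero =>
    cases r with
    | zero => simp [diffPoly, Delta_zero_left]
    | succ r => simp [diffPoly, Delta_eq_zero_of_lt, coeff_one]
  | one =>
    cases r with
    | zero => simp [diffPoly, Delta_zero_left]
    | succ r =>
      rw [Delta_succ_one ha]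
      cases r with
      | zero => simp [diffPoly, Delta_zero_left, coeff_one]
      | succ r => simp [diffPoly, Delta_eq_zero_of_lt, coeff_one]
  | more n ih₀ ih₁ =>
    cases r with
    | zero => simp [diffPoly, ih₀, ih₁, Delta_zero_left, mul_coeff_zero]
    | succ r =>
      rw [Delta_succ_add_two ha, ← ih₀, ← ih₁, ← ih₁]
      simp [diffPoly, add_mul, mul_assoc, coeff_X_mul]

theorem natDegree_diffPoly_le (ha : ∀ k, 1 ≤ k → a k ≠ 0) (η : ℕ → ℝ) (n : ℕ) :
    (diffPoly a η n).natDegree ≤ n :=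
  natDegree_le_iff_coeff_eq_zero.2 fun r hr => by
    rw [coeff_diffPoly ha, Delta_eq_zero_of_lt a η hr]

/-- The polynomial `P(X) P(-X)` for `P = diffPoly a η n`, whose value at `-i t` is
`|B_n - A_n|²`. -/
noncomputable def energyPoly (a η : ℕ → ℝ) (n : ℕ) : ℝ[X] :=
  diffPoly a η n * (diffPoly a η n).comp (-X)

theorem Kr_eq_signedEvenCoeff (ha : ∀ k, 1 ≤ k → a k ≠ 0) (η : ℕ → ℝ) (r n : ℕ) :
    Kr a η r n = signedEvenCoeff r (energyPoly a η n) := by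
  simp only [Kr, energyPoly, signedEvenCoeff_mul_comp_neg_X, coeff_diffPoly ha]

theorem Kr_zero_left (a η : ℕ → ℝ) (n : ℕ) : Kr a η 0 n = 1 := by
  simp [Kr, Delta_zero_left]

end DiffPoly

section Energy

open Polynomial

variable {a : ℕ → ℝ}

/-- The increments `P_n - P_{n-1}` of `diffPoly`, with the value `0` at `n = 0`. -/
noncomputable def incrPoly (a η : ℕ → ℝ) : ℕ → ℝ[X]
  | 0 => 0
  | n + 1 => diffPoly a η (n + 1) - diffPoly a η n

theorem diffPoly_succ (a η : ℕ → ℝ) (n : ℕ) :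
    diffPoly a η (n + 1) = diffPoly a η n + incrPoly a η (n + 1) :=
  (add_sub_cancel _ _).symm

theorem incrPoly_succ (a η : ℕ → ℝ) (n : ℕ) :
    incrPoly a η (n + 1) =
      C (a (n + 1)) * incrPoly a η n + C (η (n + 1)) * X * diffPoly a η n := by
  cases n with
  | zero => simp [incrPoly, diffPoly]
  | succ n =>
    simp only [incrPoly, diffPoly, map_add, map_one]
    ring

theorem diffPoly_succ_comp_neg_X (a η : ℕ → ℝ) (n : ℕ) :
    (diffPoly a η (n + 1)).comp (-X) =
      (diffPoly a η n).comp (-X) + (incrPoly a η (n + 1)).comp (-X) := by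
  rw [diffPoly_succ, add_comp]

theorem incrPoly_succ_comp_neg_X (a η : ℕ → ℝ) (n : ℕ) :
    (incrPoly a η (n + 1)).comp (-X) =
      C (a (n + 1)) * (incrPoly a η n).comp (-X) -
        C (η (n + 1)) * X * (diffPoly a η n).comp (-X) := by
  simp only [incrPoly_succ, add_comp, mul_comp, C_comp, X_comp]
  ring

/-- The polynomial `E(X) E(-X)` for `E = incrPoly a η n`. -/
noncomputable def incrEnergyPoly (a η : ℕ → ℝ) (n : ℕ) : ℝ[X] :=
  incrPoly a η n * (incrPoly a η n).comp (-X)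

/-- The increments of `energyPoly`, starting with `energyPoly a η 0 = 1`. -/
noncomputable def energyIncr (a η : ℕ → ℝ) : ℕ → ℝ[X]
  | 0 => 1
  | n + 1 => energyPoly a η (n + 1) - energyPoly a η n

theorem sum_energyIncr (a η : ℕ → ℝ) (n : ℕ) :
    ∑ j ∈ Finset.range (n + 1), energyIncr a η j = energyPoly a η n := by
  have start : energyPoly a η 0 = 1 := by simp [energyPoly, diffPoly]
  rw [Finset.sum_range_succ']
  simp only [energyIncr, Finset.sum_range_sub, start, sub_add_cancel]

theorem X_mul_incrPoly_cross_sub (ha : ∀ k, 1 ≤ k → a k ≠ 0) (η : ℕ → ℝ) (n : ℕ) :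
    X * (incrPoly a η n * (diffPoly a η n).comp (-X) -
        (incrPoly a η n).comp (-X) * diffPoly a η n) =
      2 * X ^ 2 * ∑ j ∈ Finset.range n, Rkl a η (j + 1) n • energyIncr a η j := by
  induction n with
  | zero => simp [incrPoly]
  | succ n ih =>
    rw [sum_Rkl_smul_succ ha, sum_energyIncr, energyPoly, smul_eq_C_mul, smul_eq_C_mul,
      diffPoly_succ_comp_neg_X, diffPoly_succ, incrPoly_succ_comp_neg_X, incrPoly_succ]
    linear_combination C (a (n + 1)) * ih

theorem incrEnergyPoly_eq (ha : ∀ k, 1 ≤ k → a k ≠ 0) (η : ℕ → ℝ) (n : ℕ) :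
    incrEnergyPoly a η n =
      -X ^ 2 * ∑ j ∈ Finset.range n, Rkl a η (j + 1) n ^ 2 • energyIncr a η j := by
  induction n with
  | zero => simp [incrEnergyPoly, incrPoly]
  | succ n ih =>
    have cross := X_mul_incrPoly_cross_sub ha η n
    rw [sum_Rkl_sq_smul_succ ha, sum_energyIncr, energyPoly]
    rw [incrEnergyPoly] at ih ⊢
    rw [incrPoly_succ_comp_neg_X, incrPoly_succ, smul_eq_C_mul, smul_eq_C_mul, smul_eq_C_mul]
    simp only [C_mul, C_pow, map_ofNat]
    linear_combination C (a (n + 1)) ^ 2 * ih - C (a (n + 1)) * C (η (n + 1)) * cross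

theorem incrPoly_cross_add (ha : ∀ k, 1 ≤ k → a k ≠ 0) (η : ℕ → ℝ) (n : ℕ) :
    incrPoly a η n * (diffPoly a η n).comp (-X) + (incrPoly a η n).comp (-X) * diffPoly a η n =
      (2 * rho a n) • ∑ l ∈ Finset.Icc 1 n, (rho a l)⁻¹ • incrEnergyPoly a η l := by
  induction n with
  | zero => simp [incrPoly]
  | succ n ih =>
    have last_term : (2 * rho a (n + 1)) • (rho a (n + 1))⁻¹ • incrEnergyPoly a η (n + 1) =
        2 * incrEnergyPoly a η (n + 1) := by
      rw [smul_smul, mul_assoc, mul_inv_cancel₀ (rho_ne_zero ha _), mul_one, smul_eq_C_mul,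
        map_ofNat]
    rw [Finset.sum_Icc_succ_top n.succ_pos, smul_add, last_term, rho_succ, ← mul_assoc,
      mul_comm (2 * rho a n), mul_smul, ← ih, smul_eq_C_mul, incrEnergyPoly,
      diffPoly_succ_comp_neg_X, diffPoly_succ, incrPoly_succ_comp_neg_X, incrPoly_succ]
    ring

/-- The factor `2 ^ H_r` of the closed form originates here: all terms but the last one carry the
factor `2` of the cross term in `(P + E)(P' + E')`. -/
theorem energyIncr_succ (ha : ∀ k, 1 ≤ k → a k ≠ 0) (η : ℕ → ℝ) (n : ℕ) :
    energyIncr a η (n + 1) = rho a (n + 1) • ∑ l ∈ Finset.Icc 1 (n + 1),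
      ((if l + 1 < n + 2 then 2 else 1) / rho a l) • incrEnergyPoly a η l := by
  have polarization : energyIncr a η (n + 1) =
      incrPoly a η (n + 1) * (diffPoly a η (n + 1)).comp (-X) +
        (incrPoly a η (n + 1)).comp (-X) * diffPoly a η (n + 1) - incrEnergyPoly a η (n + 1) := by
    rw [energyIncr, energyPoly, energyPoly, incrEnergyPoly, diffPoly_succ_comp_neg_X, diffPoly_succ]
    ring
  have earlier_terms : ∑ l ∈ Finset.Icc 1 n,
      ((if l + 1 < n + 2 then 2 else 1) / rho a l) • incrEnergyPoly a η l =
      (2 : ℝ) • ∑ l ∈ Finset.Icc 1 n, (rho a l)⁻¹ • incrEnergyPoly a η l := by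
    rw [Finset.smul_sum]
    refine Finset.sum_congr rfl fun l hl => ?_
    have := Finset.mem_Icc.1 hl
    rw [if_pos (by omega), smul_smul, div_eq_mul_inv]
  rw [polarization, incrPoly_cross_add ha, Finset.sum_Icc_succ_top n.succ_pos,
    Finset.sum_Icc_succ_top n.succ_pos, earlier_terms, if_neg (lt_irrefl _)]
  have := rho_ne_zero ha (n + 1)
  match_scalars <;> field_simp
  norm_num

theorem signedEvenCoeff_succ_incrEnergyPoly (ha : ∀ k, 1 ≤ k → a k ≠ 0) (η : ℕ → ℝ) (r n : ℕ) :
    signedEvenCoeff (r + 1) (incrEnergyPoly a η n) =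
      ∑ j ∈ Finset.range n, Rkl a η (j + 1) n ^ 2 * signedEvenCoeff r (energyIncr a η j) := by
  rw [incrEnergyPoly_eq ha, signedEvenCoeff_succ_neg_X_sq_mul, map_sum]
  simp only [map_smul, smul_eq_mul]

end Energy

section ClosedForm

open Matrix Fintype

variable {a : ℕ → ℝ}

/-- The contribution of one step `x = k_i ≤ l < k_{i+1} = m` of a chain in the closed form of `K_r`,
summed over `l`. -/
noncomputable def stepKernel (a η : ℕ → ℝ) (x m : ℕ) : ℝ :=
  ∑ l ∈ Finset.Ico x m, Tkl a η x l * (if l + 1 < m then 2 else 1)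

theorem stepKernel_eq_zero_of_le (a η : ℕ → ℝ) {x m : ℕ} (h : m ≤ x) : stepKernel a η x m = 0 := by
  rw [stepKernel, Finset.Ico_eq_empty_of_le h, Finset.sum_empty]

theorem chainWeight_stepKernel_zero_right (a η : ℕ → ℝ) (r : ℕ) :
    chainWeight (stepKernel a η) 1 r 0 = 0 := by
  cases r <;> simp [chainWeight]

theorem chainWeight_stepKernel_succ (a η : ℕ → ℝ) (r n : ℕ) :
    chainWeight (stepKernel a η) 1 (r + 1) (n + 1) =
      ∑ l ∈ Finset.Icc 1 n, (if l + 1 < n + 1 then 2 else 1) *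
        ∑ j ∈ Finset.range l, Tkl a η (j + 1) l * chainWeight (stepKernel a η) 1 r (j + 1) := by
  rw [chainWeight, Finset.sum_range_succ', chainWeight_stepKernel_zero_right, mul_zero, add_zero]
  simp only [stepKernel, Finset.sum_mul, Finset.mul_sum]
  rw [Finset.sum_comm' (t' := Finset.Icc 1 n) (s' := Finset.range)
    fun j l => by simp only [Finset.mem_range, Finset.mem_Ico, Finset.mem_Icc]; omega]
  exact Finset.sum_congr rfl fun l _ => Finset.sum_congr rfl fun j _ => by ring

theorem signedEvenCoeff_energyIncr (ha : ∀ k, 1 ≤ k → a k ≠ 0) (η : ℕ → ℝ) (r n : ℕ) :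
    signedEvenCoeff r (energyIncr a η n) =
      chainWeight (stepKernel a η) 1 r (n + 1) * rho a n := by
  induction r generalizing n with
  | zero =>
    cases n with
    | zero => simp [signedEvenCoeff_apply, energyIncr, chainWeight, rho]
    | succ n =>
      rw [energyIncr, map_sub, ← Kr_eq_signedEvenCoeff ha, ← Kr_eq_signedEvenCoeff ha,
        Kr_zero_left, Kr_zero_left]
      simp [chainWeight]
  | succ r ih =>
    cases n with
    | zero => simp [signedEvenCoeff_apply, energyIncr, chainWeight_stepKernel_succ,
        Polynomial.coeff_one]
    | succ n =>
      rw [energyIncr_succ ha, map_smul, map_sum, chainWeight_stepKernel_succ, smul_eq_mul, mul_comm]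
      congr 1
      refine Finset.sum_congr rfl fun l _ => ?_
      rw [map_smul, signedEvenCoeff_succ_incrEnergyPoly ha, smul_eq_mul, Finset.mul_sum,
        Finset.mul_sum]
      refine Finset.sum_congr rfl fun j _ => ?_
      rw [ih, Tkl, Nat.add_sub_cancel]
      ring

theorem Kr_eq_sum_chainWeight (ha : ∀ k, 1 ≤ k → a k ≠ 0) (η : ℕ → ℝ) (r n : ℕ) :
    Kr a η r n =
      ∑ m ∈ Finset.range (n + 2), chainWeight (stepKernel a η) 1 r m * rho a (m - 1) := by
  rw [Finset.sum_range_succ', chainWeight_stepKernel_zero_right, zero_mul, add_zero,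
    Kr_eq_signedEvenCoeff ha, ← sum_energyIncr, map_sum]
  exact Finset.sum_congr rfl fun j _ => signedEvenCoeff_energyIncr ha η r j

theorem filter_interlacing_eq_piFinset_Ico {r N : ℕ} {k : Fin r → ℕ}
    (hk : k ∈ piFinset fun _ => Finset.Icc 1 N) :
    (piFinset fun _ : Fin r => Finset.Icc 1 N).filter
        (fun l => (∀ i, l i < k i) ∧ ∀ i j : Fin r, (i : ℕ) + 1 = j → k i ≤ l j) =
      piFinset fun i => Finset.Ico (vecCons 1 k i.castSucc) (k i) := by
  ext l
  simp only [Finset.mem_filter, mem_piFinset, Finset.mem_Icc, Finset.mem_Ico, vecCons_castSucc]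
    at hk ⊢
  constructor
  · rintro ⟨hl, hlt, hle⟩ i
    refine ⟨?_, hlt i⟩
    split_ifs with hi
    · exact (hl i).1
    · exact hle _ i (Nat.succ_pred_eq_of_ne_zero hi)
  · intro h
    have one_le (i : Fin r) : 1 ≤ l i := by
      refine le_trans ?_ (h i).1
      split_ifs
      exacts [le_rfl, (hk _).1]
    refine ⟨fun i => ⟨one_le i, (h i).2.le.trans (hk i).2⟩, fun i => (h i).2, fun i j hij => ?_⟩
    have := (h j).1
    rw [if_neg (by omega)] at this
    rwa [show i = ⟨j - 1, Nat.lt_of_le_of_lt (Nat.sub_le _ _) j.isLt⟩ from Fin.ext (by simp; omega)]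

theorem sum_interlacing_eq_prod_stepKernel (a η : ℕ → ℝ) {r N : ℕ} {k : Fin r → ℕ}
    (hk : k ∈ piFinset fun _ => Finset.Icc 1 N) :
    ∑ l ∈ (piFinset fun _ : Fin r => Finset.Icc 1 N).filter
        (fun l => (∀ i, l i < k i) ∧ ∀ i j : Fin r, (i : ℕ) + 1 = j → k i ≤ l j),
      (∏ i, Tkl a η (vecCons 1 k i.castSucc) (l i)) *
        2 ^ (Finset.univ.filter fun i => l i + 1 < k i).card =
    ∏ i, stepKernel a η (vecCons 1 k i.castSucc) (k i) := by
  simp only [filter_interlacing_eq_piFinset_Ico hk, stepKernel, Finset.prod_univ_sum,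
    Finset.prod_mul_distrib, ← Finset.prod_filter, Finset.prod_const]

theorem Kr_eq_sum_chains (ha : ∀ k, 1 ≤ k → a k ≠ 0) (η : ℕ → ℝ) (r n : ℕ) :
    Kr a η r n =
      ∑ p ∈ ((piFinset fun _ : Fin r => Finset.Icc 1 (n + 1)) ×ˢ
          (piFinset fun _ : Fin r => Finset.Icc 1 (n + 1))).filter
          (fun p => (∀ i, p.2 i < p.1 i) ∧ ∀ i j : Fin r, (i : ℕ) + 1 = j → p.1 i ≤ p.2 j),
        (∏ i, Tkl a η (vecCons 1 p.1 i.castSucc) (p.2 i)) *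
          rho a (vecCons 1 p.1 (Fin.last r) - 1) *
          2 ^ (Finset.univ.filter fun i => p.2 i + 1 < p.1 i).card := by
  rw [Kr_eq_sum_chainWeight ha, ← sum_prod_vecCons_eq_sum_chainWeight
    (fun _ _ => stepKernel_eq_zero_of_le a η) n.succ_pos r fun m => rho a (m - 1),
    Finset.sum_filter, Finset.sum_product]
  refine Finset.sum_congr rfl fun k hk => ?_
  rw [← sum_interlacing_eq_prod_stepKernel a η hk, Finset.sum_mul, ← Finset.sum_filter]
  exact Finset.sum_congr rfl fun l _ => by ring

end ClosedForm

theorem stmt_14_general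
    (a η : ℕ → ℝ) (ha : ∀ k : ℕ, 1 ≤ k → a k ≠ 0) (t : ℝ)
    (B : ℤ → ℂ) (hBm : B (-1) = 0) (hB0 : B 0 = 1)
    (hB : ∀ n : ℕ, 1 ≤ n →
      B (n : ℤ) = (((1 + a n : ℝ) : ℂ) - Complex.I * (t : ℂ) * ((η n : ℝ) : ℂ)) * B ((n : ℤ) - 1)
        - ((a n : ℝ) : ℂ) * B ((n : ℤ) - 2))
    (A : ℤ → ℂ) (hA0 : A 0 = 0) (hA1 : A 1 = ((a 1 : ℝ) : ℂ))
    (hA : ∀ n : ℕ, 2 ≤ n →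
      A (n : ℤ) = (((1 + a n : ℝ) : ℂ) - Complex.I * (t : ℂ) * ((η n : ℝ) : ℂ)) * A ((n : ℤ) - 1)
        - ((a n : ℝ) : ℂ) * A ((n : ℤ) - 2)) :
    (∀ n : ℕ,
      ‖B (n : ℤ) - A (n : ℤ)‖ ^ 2 =
        ∑ r ∈ Finset.range (n + 1), t ^ (2 * r) * Kr a η r n) ∧
    (∀ n : ℕ, Kr a η 0 n = 1) ∧
    (∀ (n r : ℕ) (hr : 1 ≤ r),
      Kr a η r n =
        ∑ p ∈ ((Fintype.piFinset fun _ : Fin r => Finset.Icc 1 (n + 1)) ×ˢ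
            (Fintype.piFinset fun _ : Fin r => Finset.Icc 1 (n + 1))).filter
            (fun p => (∀ i : Fin r, p.2 i < p.1 i) ∧
              (∀ i j : Fin r, (i : ℕ) + 1 = (j : ℕ) → p.1 i ≤ p.2 j)),
          (∏ i : Fin r, Tkl a η
              (if (i : ℕ) = 0 then 1
                else p.1 ⟨(i : ℕ) - 1, Nat.lt_of_le_of_lt (Nat.sub_le _ _) i.isLt⟩)
              (p.2 i)) *
            rho a (p.1 ⟨r - 1, by omega⟩ - 1) *
            (2 : ℝ) ^ (Finset.univ.filter (fun i : Fin r => p.2 i + 1 < p.1 i)).card) := by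
  refine ⟨fun n => ?_, Kr_zero_left a η, fun n r hr => ?_⟩
  · have diff_eq : B n - A n = Polynomial.aeval (-(Complex.I * t)) (diffPoly a η n) := by
      refine eq_aeval_diffPoly (D := fun n : ℕ => B n - A n) (by simp [hB0, hA0]) ?_ (fun m => ?_) n
      · have hB1 := hB 1 le_rfl
        norm_num [hB0, hBm] at hB1
        simp only [Nat.cast_one, hB1, hA1]
        ring
      · have hB_step := hB (m + 2) (by omega)
        have hA_step := hA (m + 2) (by omega)
        rw [show ((m + 2 : ℕ) : ℤ) - 1 = (m + 1 : ℕ) by push_cast; ring,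
          show ((m + 2 : ℕ) : ℤ) - 2 = m by push_cast; ring] at hB_step hA_step
        rw [hB_step, hA_step]
        push_cast
        ring
    simp only [diff_eq, norm_sq_aeval_neg_I_mul (natDegree_diffPoly_le ha η n) t,
      Kr_eq_signedEvenCoeff ha, energyPoly]
  · obtain ⟨r, rfl⟩ := Nat.exists_eq_add_of_le' hr
    simp only [Kr_eq_sum_chains ha, vecCons_castSucc]
    rfl

/-- `|B n - A n|² = ∑_{r=0}^n t^{2r} K_r(n)` with `K_r` the alternating sum of products of
`Δ`'s; `K_0(n) = 1`, and for `1 ≤ r ≤ n` the closed form of `K_r(n)` as a sum over chains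
`1 ≤ l₁ < k₂ ≤ l₂ < ⋯ < k_r ≤ l_r < k_{r+1} ≤ n+1` of
`T_1^{l₁} ⋯ T_{k_r}^{l_r} ρ_{k_{r+1}-1} 2^{H_r}` with `H_r = #{i : l_i + 1 < k_{i+1}}`. -/
theorem stmt_14
    (a η : ℕ → ℝ) (ha : ∀ k : ℕ, 1 ≤ k → 0 < a k) (t : ℝ)
    (B : ℤ → ℂ) (hBm : B (-1) = 0) (hB0 : B 0 = 1)
    (hB : ∀ n : ℕ, 1 ≤ n →
      B (n : ℤ) = (((1 + a n : ℝ) : ℂ) - Complex.I * (t : ℂ) * ((η n : ℝ) : ℂ)) * B ((n : ℤ) - 1)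
        - ((a n : ℝ) : ℂ) * B ((n : ℤ) - 2))
    (A : ℤ → ℂ) (hA0 : A 0 = 0) (hA1 : A 1 = ((a 1 : ℝ) : ℂ))
    (hA : ∀ n : ℕ, 2 ≤ n →
      A (n : ℤ) = (((1 + a n : ℝ) : ℂ) - Complex.I * (t : ℂ) * ((η n : ℝ) : ℂ)) * A ((n : ℤ) - 1)
        - ((a n : ℝ) : ℂ) * A ((n : ℤ) - 2)) :
    (∀ n : ℕ,
      ‖B (n : ℤ) - A (n : ℤ)‖ ^ 2 =
        ∑ r ∈ Finset.range (n + 1), t ^ (2 * r) * Kr a η r n) ∧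
    (∀ n : ℕ, Kr a η 0 n = 1) ∧
    (∀ (n r : ℕ) (hr : 1 ≤ r) (_ : r ≤ n),
      Kr a η r n =
        ∑ p ∈ ((Fintype.piFinset fun _ : Fin r => Finset.Icc 1 (n + 1)) ×ˢ
            (Fintype.piFinset fun _ : Fin r => Finset.Icc 1 (n + 1))).filter
            (fun p => (∀ i : Fin r, p.2 i < p.1 i) ∧
              (∀ i j : Fin r, (i : ℕ) + 1 = (j : ℕ) → p.1 i ≤ p.2 j)),
          (∏ i : Fin r, Tkl a η
              (if (i : ℕ) = 0 then 1
                else p.1 ⟨(i : ℕ) - 1, Nat.lt_of_le_of_lt (Nat.sub_le _ _) i.isLt⟩)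
              (p.2 i)) *
            rho a (p.1 ⟨r - 1, by omega⟩ - 1) *
            (2 : ℝ) ^ (Finset.univ.filter (fun i : Fin r => p.2 i + 1 < p.1 i)).card) := by
  obtain ⟨norm_sq, zeroth, closed⟩ :=
    stmt_14_general a η (fun k hk => (ha k hk).ne') t B hBm hB0 hB A hA0 hA1 hA
  exact ⟨norm_sq, zeroth, fun n r hr _ => closed n r hr⟩
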